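/- Let n > 1 be an integer. Then the permanent of the (n−1)×(n−1) real matrix with (j,k)-entry cos(π(j+k)/n) (for 1 ≤ j,k ≤ n−1) equals ((n−1)!/(−2)^{n-1})·∑_{k=0}^{n-1} 1/binom(n−1,k). -/

import Mathlib

/-!
Put `m = n - 1` and let `ζ = exp (π i / n)`, `ω = ζ ^ 2`, a primitive `n`-th root of unity. Then
`cos (π (j + k) / n) = (1/2) ζ⁻¹ ^ j ζ⁻¹ ^ k (1 + ω ^ j ω ^ k)`, so up to a scalar the permanent
is that of a matrix of the form `1 + x_j x_k`.

For matrices `1 + x_j y_k` of size `m` the permanent is `∑ r, m! / C(m, r) * e_r(x) * e_r(y)`, with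
`e_r` the elementary symmetric sums (`permanent_one_add_mul`). Indeed, expanding the product over
`i` of `1 + x_{σ i} y_i` gives a sum over subsets `T`, and averaging `∏_{i ∈ T} x_{σ i}` over all
permutations `σ` gives `e_r(x) / C(m, r)` with `r = #T` (`sum_perm_prod`).

Since `∏_{j=1}^{n-1} (X - ω ^ j) = 1 + X + ⋯ + X ^ (n-1)`, all elementary symmetric sums of the
numbers `-ω ^ j` equal `1` (`sum_powersetCard_neg_pow`). Taking `x_j = y_j = -ω ^ j` turns the
formula into `m! ∑ r, 1 / C(m, r)`. The top symmetric sum also gives `∏ ω ^ j = (-1) ^ m`, which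
supplies the sign coming from the scalars `ζ⁻¹ ^ j ζ⁻¹ ^ k`.
-/

open Finset Polynomial in
/-- All elementary symmetric sums of the negated nontrivial `(m + 1)`-st roots of unity are `1`. -/
lemma sum_powersetCard_neg_pow (m : ℕ) (ω : ℂ) (hω : IsPrimitiveRoot ω (m + 1)) (r : ℕ)
    (hr : r ≤ m) :
    ∑ T ∈ powersetCard r (univ : Finset (Fin m)), ∏ i ∈ T, (-ω ^ ((i : ℕ) + 1)) = 1 := by
  have h := X_pow_sub_C_eq_prod hω m.zero_lt_succ (one_pow (m + 1))
  rw [C_1, ← mul_geom_sum, prod_range_succ', pow_zero, mul_one, mul_comm, eq_comm] at h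
  replace h := mul_right_cancel₀ (Polynomial.X_sub_C_ne_zero 1) h
  have h2 := Finset.prod_X_add_C_coeff (univ : Finset (Fin m))
    (fun i => -ω ^ ((i : ℕ) + 1)) (k := m - r) (by simp)
  have h3 : ∏ i : Fin m, (X + C (-ω ^ ((i : ℕ) + 1))) = ∑ i ∈ range (m + 1), (X : ℂ[X]) ^ i := by
    rw [← h, ← Fin.prod_univ_eq_prod_range (fun i => X - C (ω ^ (i + 1) * 1))]
    refine prod_congr rfl fun i _ => ?_
    rw [mul_one, C_neg, sub_eq_add_neg]
  rw [h3, card_univ, Fintype.card_fin, Nat.sub_sub_self hr] at h2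
  rw [← h2, finsetSum_coeff]
  simp only [coeff_X_pow]
  rw [sum_ite_eq, if_pos]
  simp only [mem_range]
  omega

open Finset in
lemma exists_perm_map_eq {ι : Type*} [Fintype ι] [DecidableEq ι] (S T : Finset ι)
    (h : #S = #T) : ∃ ρ : Equiv.Perm ι, S.map ρ.toEmbedding = T := by
  let e : {x // x ∈ S} ≃ {x // x ∈ T} := Finset.equivOfCardEq h
  refine ⟨e.extendSubtype, Finset.eq_of_subset_of_card_le ?_ (by simp [h])⟩
  intro y hy
  obtain ⟨x, hx, rfl⟩ := Finset.mem_map.1 hy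
  exact e.extendSubtype_mem x hx

open Finset in
/-- The sum over all permutations `σ` of `∏_{i ∈ T} x_{σ i}`. It depends only on `#T`, because
permutations act transitively on subsets of a given size, so it equals its average over all
subsets of that size. -/
lemma sum_perm_prod {ι : Type*} [Fintype ι] [DecidableEq ι] (x : ι → ℂ) (T : Finset ι) :
    ∑ σ : Equiv.Perm ι, ∏ i ∈ T, x (σ i)
      = (Fintype.card ι).factorial / ((Fintype.card ι).choose #T : ℂ)
        * ∑ S ∈ powersetCard #T univ, ∏ i ∈ S, x i := by
  have key : ∀ S ∈ powersetCard #T (univ : Finset ι),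
      ∑ σ : Equiv.Perm ι, ∏ i ∈ S, x (σ i) = ∑ σ : Equiv.Perm ι, ∏ i ∈ T, x (σ i) := by
    intro S hS
    obtain ⟨ρ, rfl⟩ := exists_perm_map_eq S T (mem_powersetCard.1 hS).2
    simp only [prod_map]
    exact ((Group.mulRight_bijective ρ).sum_comp
      fun σ : Equiv.Perm ι => ∏ i ∈ S, x (σ i)).symm
  have key2 : ∀ σ : Equiv.Perm ι, ∑ S ∈ powersetCard #T (univ : Finset ι), ∏ i ∈ S, x (σ i)
      = ∑ S ∈ powersetCard #T (univ : Finset ι), ∏ i ∈ S, x i := by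
    intro σ
    refine sum_bij' (fun S _ => S.map σ.toEmbedding) (fun S _ => S.map σ.symm.toEmbedding)
      ?_ ?_ ?_ ?_ ?_
    · intro S hS; simpa [mem_powersetCard] using hS
    · intro S hS; simpa [mem_powersetCard] using hS
    · intro S _; ext; simp
    · intro S _; ext; simp
    · intro S _; simp
  have h := sum_congr rfl key
  rw [sum_comm, sum_congr rfl fun σ _ => key2 σ, sum_const, sum_const, card_powersetCard,
    card_univ, card_univ, Fintype.card_perm, nsmul_eq_mul, nsmul_eq_mul] at h
  have hc : ((Fintype.card ι).choose #T : ℂ) ≠ 0 :=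
    Nat.cast_ne_zero.2 (Nat.choose_pos (card_le_univ T)).ne'
  field_simp
  rw [h, mul_comm]

open Finset in
lemma permanent_one_add_mul (m : ℕ) (x y : Fin m → ℂ) :
    (Matrix.of fun j k => 1 + x j * y k).permanent
      = ∑ r ∈ range (m + 1), (m.factorial : ℂ) / (m.choose r : ℂ)
        * (∑ S ∈ powersetCard r univ, ∏ i ∈ S, x i)
        * (∑ S ∈ powersetCard r univ, ∏ i ∈ S, y i) := by
  simp only [Matrix.permanent, Matrix.of_apply, prod_one_add]
  rw [sum_comm, sum_powerset, card_univ, Fintype.card_fin]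
  refine sum_congr rfl fun r _ => ?_
  rw [mul_sum]
  refine sum_congr rfl fun T hT => ?_
  obtain rfl := (mem_powersetCard.1 hT).2
  simp only [prod_mul_distrib]
  rw [← sum_mul, sum_perm_prod, Fintype.card_fin]

/-- Let `n > 1`. The permanent of the `(n-1) × (n-1)` real matrix with `(j,k)`-entry
`cos (π * (j+k) / n)` equals `((n-1)! / (-2)^(n-1)) * ∑_{k=0}^{n-1} 1 / binom(n-1,k)`. -/
theorem permanent_cos_pi_add_div (n : ℕ) (hn : 1 < n) :
    (Matrix.of fun j k : Fin (n - 1) =>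
        Real.cos (Real.pi * ((((j : ℕ) + 1) + ((k : ℕ) + 1) : ℕ) : ℝ) / (n : ℝ))).permanent
      = (Nat.factorial (n - 1) : ℝ) / (-2 : ℝ) ^ (n - 1)
          * ∑ k ∈ Finset.range n, 1 / ((n - 1).choose k : ℝ) := by
  obtain ⟨m, rfl⟩ : ∃ m, n = m + 1 := ⟨n - 1, by omega⟩
  simp only [Nat.add_sub_cancel]
  apply Complex.ofReal_injective
  set ζ : ℂ := Complex.exp (Real.pi * Complex.I / (m + 1 : ℕ)) with hζ
  have hζ0 : ζ ≠ 0 := Complex.exp_ne_zero _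
  have hω : IsPrimitiveRoot (ζ ^ 2) (m + 1) := by
    convert Complex.isPrimitiveRoot_exp (m + 1) m.succ_ne_zero using 1
    rw [hζ, ← Complex.exp_nat_mul]
    congr 1
    push_cast
    ring
  have hcos : ∀ a b : ℕ, ((Real.cos (Real.pi * ((a + b : ℕ) : ℝ) / ((m + 1 : ℕ) : ℝ)) : ℝ) : ℂ)
      = 2⁻¹ * (ζ⁻¹ ^ a * ζ⁻¹ ^ b) * (1 + (-(ζ ^ 2) ^ a) * (-(ζ ^ 2) ^ b)) := by
    intro a b
    have h1 : Complex.exp ((Real.pi * ((a + b : ℕ) : ℝ) / ((m + 1 : ℕ) : ℝ) : ℂ) * Complex.I)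
        = ζ ^ (a + b) := by
      rw [hζ, ← Complex.exp_nat_mul]
      congr 1
      push_cast
      ring
    rw [Complex.ofReal_cos, Complex.cos]
    push_cast at h1 ⊢
    rw [neg_mul, Complex.exp_neg, h1]
    simp only [inv_pow]
    field_simp
    ring
  have hprod : ∏ i : Fin m, (ζ ^ 2) ^ ((i : ℕ) + 1) = (-1) ^ m := by
    have h := sum_powersetCard_neg_pow m (ζ ^ 2) hω m le_rfl
    have hu : Finset.powersetCard m (Finset.univ : Finset (Fin m)) = {Finset.univ} := by
      simpa using Finset.powersetCard_self (Finset.univ : Finset (Fin m))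
    rw [hu, Finset.sum_singleton, Finset.prod_neg, Finset.card_univ, Fintype.card_fin] at h
    have hs : ((-1 : ℂ) ^ m) * (-1) ^ m = 1 := by rw [← mul_pow]; simp
    linear_combination (-1 : ℂ) ^ m * h - (∏ i : Fin m, (ζ ^ 2) ^ ((i : ℕ) + 1)) * hs
  have hinv : (∏ i : Fin m, ζ⁻¹ ^ ((i : ℕ) + 1)) * (∏ i : Fin m, ζ⁻¹ ^ ((i : ℕ) + 1))
      = (-1) ^ m := by
    rw [← Finset.prod_mul_distrib]
    have h2 : ∀ i : Fin m, ζ⁻¹ ^ ((i : ℕ) + 1) * ζ⁻¹ ^ ((i : ℕ) + 1)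
        = ((ζ ^ 2) ^ ((i : ℕ) + 1))⁻¹ := by
      intro i
      rw [← mul_pow, ← inv_pow]
      congr 1
      field_simp
    rw [Finset.prod_congr rfl fun i _ => h2 i, Finset.prod_inv_distrib, hprod, ← inv_pow]
    norm_num
  have hper := permanent_one_add_mul m (fun i => -(ζ ^ 2) ^ ((i : ℕ) + 1))
    (fun i => -(ζ ^ 2) ^ ((i : ℕ) + 1))
  have hscale : (((Matrix.of fun j k : Fin m => Real.cos (Real.pi *
      ((((j : ℕ) + 1) + ((k : ℕ) + 1) : ℕ) : ℝ) / ((m + 1 : ℕ) : ℝ))).permanent : ℝ) : ℂ)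
      = 2⁻¹ ^ m * (-1) ^ m * (Matrix.of fun j k : Fin m =>
        1 + (-(ζ ^ 2) ^ ((j : ℕ) + 1)) * (-(ζ ^ 2) ^ ((k : ℕ) + 1))).permanent := by
    simp only [Matrix.permanent, Matrix.of_apply]
    rw [Complex.ofReal_sum, Finset.mul_sum]
    refine Finset.sum_congr rfl fun σ _ => ?_
    rw [Complex.ofReal_prod, Finset.prod_congr rfl fun i _ => hcos _ _]
    rw [Finset.prod_mul_distrib, Finset.prod_mul_distrib, Finset.prod_mul_distrib,
      Equiv.prod_comp σ fun i : Fin m => ζ⁻¹ ^ ((i : ℕ) + 1), hinv, Finset.prod_const,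
      Finset.card_univ, Fintype.card_fin]
  refine hscale.trans ?_
  rw [hper]
  have hsum : ∀ r ∈ Finset.range (m + 1), (m.factorial : ℂ) / (m.choose r : ℂ)
        * (∑ S ∈ Finset.powersetCard r Finset.univ, ∏ i ∈ S, -(ζ ^ 2) ^ (((i : Fin m) : ℕ) + 1))
        * (∑ S ∈ Finset.powersetCard r Finset.univ, ∏ i ∈ S, -(ζ ^ 2) ^ (((i : Fin m) : ℕ) + 1))
      = m.factorial * (1 / (m.choose r : ℂ)) := by
    intro r hr
    rw [sum_powersetCard_neg_pow m _ hω r (Nat.lt_succ_iff.1 (Finset.mem_range.1 hr))]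
    ring
  rw [Finset.sum_congr rfl hsum, ← Finset.mul_sum, ← mul_pow]
  push_cast
  have h2 : ((2 : ℂ)⁻¹ * -1) ^ m = ((-2 : ℂ) ^ m)⁻¹ := by
    rw [← inv_pow]
    norm_num
  rw [h2]
  ring
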